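/- arXiv:1803.10543 — 9 statements merged into one kernel-verified Lean document; each statement's English description precedes it below -/
import Mathlib

section
/- For every formula φ of the closed Reflection Calculus RC⁰ there exists a worm A such that φ ≡_RC A (i.e. φ ⊢_RC A and A ⊢_RC φ). -/
/-!
By induction on the formula it suffices to show that the conjunction of two worms is equivalent to
a worm. Let `μ` be the least ordinal occurring in the worms `A` and `B`, and split each of them at
its first `μ`: `A = A₁ ++ R` with all entries of `A₁` above `μ`, where `R` is empty or starts
with `μ` (`exists_split`). Such a worm is equivalent to the conjunction `A₁ ∧ R`
(`der_append`, `append_der_left`, `append_der_right`), so `A ∧ B` is equivalent to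
`(A₁ ∧ B₁) ∧ (R ∧ S)`. Induction on the total length turns `A₁ ∧ B₁` into a worm with entries
above `μ`. One of the remainders `R`, `S` derives the other, so `R ∧ S` collapses to one of them,
and gluing the two parts back together gives the desired worm.

The comparability of the remainders rests on the trichotomy for worms with entries at least `α`
(`trichotomy`): `A ⊢ ⟨α⟩B`, or `B ⊢ ⟨α⟩A`, or `A` and `B` are equivalent. With the splitting above
at `μ`, induction applied to `A` and the tail of `S` shows that either `B ⊢ ⟨μ⟩A` or `A ⊢ S`, and
symmetrically for `B` and `R`. If `A ⊢ S` and `B ⊢ R`, the trichotomy for the heads `A₁`, `B₁`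
at level `μ + 1` lifts to `A` and `B` through the axiom
`⟨α⟩φ ∧ ⟨β⟩ψ ⊢ ⟨α⟩(φ ∧ ⟨β⟩ψ)`.
-/

/-- A worm is a finite list of ordinals; `[]` is ⊤. -/
abbrev Worm : Type _ := List Ordinal

/-- Formulas of the closed Reflection Calculus RC⁰. -/
inductive RCFormula : Type _ where
  | top : RCFormula
  | and : RCFormula → RCFormula → RCFormula
  | dia : Ordinal → RCFormula → RCFormula

/-- The RC⁰ formula corresponding to a worm. -/
def Worm.toRC : Worm → RCFormula
  | [] => .top
  | α :: A => .dia α (Worm.toRC A)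

/-- Derivability in the closed Reflection Calculus RC⁰. -/
inductive RCDer : RCFormula → RCFormula → Prop where
  | refl (φ) : RCDer φ φ
  | top (φ) : RCDer φ .top
  | andL (φ ψ) : RCDer (.and φ ψ) φ
  | andR (φ ψ) : RCDer (.and φ ψ) ψ
  | trans_ax (α φ) : RCDer (.dia α (.dia α φ)) (.dia α φ)
  | mono_ax {α β : Ordinal} (φ) : β < α → RCDer (.dia α φ) (.dia β φ)
  | ax5 {α β : Ordinal} (φ ψ) : β < α →
      RCDer (.and (.dia α φ) (.dia β ψ)) (.dia α (.and φ (.dia β ψ)))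
  | cut {φ ψ χ} : RCDer φ ψ → RCDer ψ χ → RCDer φ χ
  | andI {φ ψ χ} : RCDer φ ψ → RCDer φ χ → RCDer φ (.and ψ χ)
  | nec {φ ψ} (α) : RCDer φ ψ → RCDer (.dia α φ) (.dia α ψ)

/-- Derivability in the Worm Calculus WC. -/
inductive WCDer : Worm → Worm → Prop where
  | top (A) : WCDer A []
  | trans_ax (α A) : WCDer (α :: α :: A) (α :: A)
  | mono_ax {α β : Ordinal} (A) : β < α → WCDer (α :: A) (β :: A)
  | cut {A B C} : WCDer A B → WCDer B C → WCDer A C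
  | nec {A B} (α) : WCDer A B → WCDer (α :: A) (α :: B)
  | rule3 {A B C} (α) : WCDer A B → WCDer A (α :: C) →
      (∀ β ∈ B, α + 1 ≤ β) → WCDer A (B ++ α :: C)

open Classical in
/-- The α-head of a worm: its longest initial segment with all entries ≥ α. -/
noncomputable def wormHead (α : Ordinal) (A : Worm) : Worm :=
  A.takeWhile (fun β => decide (α ≤ β))

open Classical in
/-- The α-remainder of a worm: what is left after removing the α-head. -/
noncomputable def wormRem (α : Ordinal) (A : Worm) : Worm :=
  A.dropWhile (fun β => decide (α ≤ β))

/-- The α-body of a worm: the tail of its (α+1)-remainder. -/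
noncomputable def wormBody (α : Ordinal) (A : Worm) : Worm :=
  (wormRem (α + 1) A).tail

/-- A Kripke model: a carrier with a relation for each ordinal. -/
structure KripkeModel : Type _ where
  W : Type _
  R : Ordinal → W → W → Prop

/-- Forcing of worms in a Kripke model. -/
def KripkeModel.forces (M : KripkeModel) : M.W → Worm → Prop
  | _, [] => True
  | x, α :: A => ∃ y, M.R α x y ∧ M.forces y A

/-- A Kripke model is Euclidean if `x R_α y` and `x R_β z` with `β < α` imply `y R_β z`. -/
def KripkeModel.Euclidean (M : KripkeModel) : Prop :=
  ∀ ⦃α β : Ordinal⦄, β < α → ∀ ⦃x y z : M.W⦄, M.R α x y → M.R β x z → M.R β y z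

/-- A Kripke model is a universal model for WC if derivability coincides with
semantic consequence on the model. -/
def KripkeModel.UniversalWC (M : KripkeModel) : Prop :=
  ∀ A B : Worm, WCDer A B ↔ ∀ x : M.W, M.forces x A → M.forces x B

/-! ### Derived rules -/

namespace RCDer

theorem and_mono {φ φ' ψ ψ' : RCFormula} (h : RCDer φ φ') (h' : RCDer ψ ψ') :
    RCDer (.and φ ψ) (.and φ' ψ') :=
  .andI (.cut (.andL _ _) h) (.cut (.andR _ _) h')

theorem mono_le {α β : Ordinal} (φ : RCFormula) (h : β ≤ α) :
    RCDer (.dia α φ) (.dia β φ) := by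
  rcases h.eq_or_lt with rfl | h
  · exact .refl _
  · exact .mono_ax _ h

theorem dia_trans {α : Ordinal} {φ ψ χ : RCFormula} (h : RCDer φ (.dia α ψ))
    (h' : RCDer ψ (.dia α χ)) : RCDer φ (.dia α χ) :=
  .cut h (.cut (.nec α h') (.trans_ax _ _))

end RCDer

/-! ### Splitting a worm at its least entry -/

/-- `IsRest μ R` says that the worm `R` is empty or starts with `μ`: the shape of what is left of a
worm with entries at least `μ` after its longest initial segment with entries above `μ`. -/
def IsRest (μ : Ordinal) (R : Worm) : Prop := R = [] ∨ ∃ A : Worm, R = μ :: A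

theorem append_der_left (A R : Worm) : RCDer (Worm.toRC (A ++ R)) (Worm.toRC A) := by
  induction A with
  | nil => exact .top _
  | cons a A ih => exact .nec a ih

theorem append_der_right {μ : Ordinal} {R : Worm} (hR : IsRest μ R) (A : Worm)
    (hA : ∀ β ∈ A, μ < β) : RCDer (Worm.toRC (A ++ R)) (Worm.toRC R) := by
  rcases hR with rfl | ⟨C, rfl⟩
  · exact .top _
  induction A with
  | nil => exact .refl _
  | cons a A ih =>
    have h := ih fun β hβ => hA β (List.mem_cons_of_mem _ hβ)
    exact .cut (.cut (.nec a h) (.mono_ax _ (hA a List.mem_cons_self))) (.trans_ax _ _)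

theorem der_append {μ : Ordinal} {R : Worm} (hR : IsRest μ R) (A : Worm)
    (hA : ∀ β ∈ A, μ < β) :
    RCDer (.and (Worm.toRC A) (Worm.toRC R)) (Worm.toRC (A ++ R)) := by
  rcases hR with rfl | ⟨C, rfl⟩
  · simpa using RCDer.andL _ _
  induction A with
  | nil => exact .andR _ _
  | cons a A ih =>
    have h := ih fun β hβ => hA β (List.mem_cons_of_mem _ hβ)
    exact .cut (.ax5 _ _ (hA a List.mem_cons_self)) (.nec a h)

theorem exists_split (μ : Ordinal) (A : Worm) (hA : ∀ β ∈ A, μ ≤ β) :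
    ∃ H R : Worm, A = H ++ R ∧ (∀ β ∈ H, μ < β) ∧ IsRest μ R := by
  induction A with
  | nil => exact ⟨[], [], rfl, by simp, .inl rfl⟩
  | cons a A ih =>
    rcases (hA a List.mem_cons_self).eq_or_lt with rfl | h
    · exact ⟨[], μ :: A, rfl, by simp, .inr ⟨A, rfl⟩⟩
    · obtain ⟨H, R, rfl, hH, hR⟩ := ih fun β hβ => hA β (List.mem_cons_of_mem _ hβ)
      exact ⟨a :: H, R, rfl, by simpa [h] using hH, hR⟩

theorem exists_min (L : Worm) (hL : L ≠ []) : ∃ μ ∈ L, ∀ β ∈ L, μ ≤ β := by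
  induction L with
  | nil => exact absurd rfl hL
  | cons a L ih =>
    by_cases h : L = []
    · exact ⟨a, by simp, by simp [h]⟩
    · obtain ⟨μ, hμ, hmin⟩ := ih h
      rcases le_total a μ with h' | h'
      · refine ⟨a, by simp, fun β hβ => ?_⟩
        rcases List.mem_cons.1 hβ with rfl | hβ
        · exact le_rfl
        · exact h'.trans (hmin β hβ)
      · refine ⟨μ, by simp [hμ], fun β hβ => ?_⟩
        rcases List.mem_cons.1 hβ with rfl | hβ
        · exact h'
        · exact hmin β hβ

/-- Two worms that are not both empty, split at the first occurrence of their least common entry.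
At least one of the remainders is nonempty, so the heads are shorter in total. -/
theorem exists_split_pair (A B : Worm) (hne : A ++ B ≠ []) :
    ∃ μ ∈ A ++ B, (∀ β ∈ A, μ ≤ β) ∧ (∀ β ∈ B, μ ≤ β) ∧
      ∃ H R K S : Worm, A = H ++ R ∧ B = K ++ S ∧ (∀ β ∈ H, μ < β) ∧ (∀ β ∈ K, μ < β) ∧
        IsRest μ R ∧ IsRest μ S ∧ H.length + K.length < A.length + B.length := by
  obtain ⟨μ, hμ, hmin⟩ := exists_min (A ++ B) hne
  have hA : ∀ β ∈ A, μ ≤ β := fun β hβ => hmin β (List.mem_append_left _ hβ)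
  have hB : ∀ β ∈ B, μ ≤ β := fun β hβ => hmin β (List.mem_append_right _ hβ)
  obtain ⟨H, R, rfl, hH, hR⟩ := exists_split μ A hA
  obtain ⟨K, S, rfl, hK, hS⟩ := exists_split μ B hB
  refine ⟨μ, hμ, hA, hB, H, R, K, S, rfl, rfl, hH, hK, hR, hS, ?_⟩
  by_contra hlen
  simp only [List.length_append] at hlen
  have hR0 : R = [] := List.length_eq_zero_iff.1 (by omega)
  have hS0 : S = [] := List.length_eq_zero_iff.1 (by omega)
  subst hR0 hS0
  simp only [List.append_nil, List.mem_append] at hμ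
  rcases hμ with h | h
  · exact lt_irrefl _ (hH _ h)
  · exact lt_irrefl _ (hK _ h)

/-! ### Trichotomy -/

/-- The three possible outcomes of comparing two worms at level `α`. -/
def Comparable (α : Ordinal) (A B : Worm) : Prop :=
  RCDer A.toRC (.dia α B.toRC) ∨ RCDer B.toRC (.dia α A.toRC) ∨
    (RCDer A.toRC B.toRC ∧ RCDer B.toRC A.toRC)

/-- If `A` can be compared with the tail of the remainder of `B = K ++ S`, then either `B` lies
above `A`, or `A` derives that remainder. -/
theorem above_or_der_rest {μ : Ordinal} {A K S : Worm} (hK : ∀ β ∈ K, μ < β)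
    (hS : IsRest μ S) (ih : ∀ C : Worm, S = μ :: C → Comparable μ A C) :
    RCDer (Worm.toRC (K ++ S)) (.dia μ A.toRC) ∨ RCDer A.toRC S.toRC := by
  have hr := append_der_right hS K hK
  rcases hS with rfl | ⟨C, rfl⟩
  · exact .inr (.top _)
  rcases ih C rfl with h | h | ⟨-, h⟩
  · exact .inr h
  · exact .inl (.dia_trans hr h)
  · exact .inl (.cut hr (.nec μ h))

/-- If `φ` lies above the head `K` at level `μ + 1` and derives the remainder `S`, then `φ`
lies above `K ++ S` at level `μ`. -/
theorem above_of_head {μ : Ordinal} {φ : RCFormula} {K S : Worm} (hK : ∀ β ∈ K, μ < β)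
    (hS : IsRest μ S) (h1 : RCDer φ (.dia (μ + 1) K.toRC)) (h2 : RCDer φ S.toRC) :
    RCDer φ (.dia μ (Worm.toRC (K ++ S))) := by
  -- `(μ + 1) :: K` is again a head above `μ`, so it can be glued to `S`.
  have hlt : μ < μ + 1 := lt_add_one μ
  have hK' : ∀ β ∈ (μ + 1) :: K, μ < β := by simpa [hlt] using hK
  have h := der_append hS ((μ + 1) :: K) hK'
  exact .cut (.andI h1 h2) (.cut h (.mono_ax _ hlt))

theorem trichotomy (n : ℕ) : ∀ (A B : Worm) (α : Ordinal), A.length + B.length = n →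
    (∀ β ∈ A, α ≤ β) → (∀ β ∈ B, α ≤ β) → Comparable α A B := by
  induction n using Nat.strong_induction_on with
  | _ n ih =>
  intro A B α hn hαA hαB
  by_cases hne : A ++ B = []
  · obtain ⟨rfl, rfl⟩ := List.append_eq_nil_iff.1 hne
    exact .inr (.inr ⟨.refl _, .refl _⟩)
  obtain ⟨μ, hμ, hA, hB, H, R, K, S, hAe, hBe, hH, hK, hR, hS, hlen⟩ :=
    exists_split_pair A B hne
  have hαμ : α ≤ μ := (List.mem_append.1 hμ).elim (hαA μ) (hαB μ)
  -- Comparing at the least entry `μ` suffices, since `⟨μ⟩φ ⊢ ⟨α⟩φ`.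
  suffices h : Comparable μ A B by
    rcases h with h | h | h
    · exact .inl (.cut h (.mono_le _ hαμ))
    · exact .inr (.inl (.cut h (.mono_le _ hαμ)))
    · exact .inr (.inr h)
  have c1 : RCDer B.toRC (.dia μ A.toRC) ∨ RCDer A.toRC S.toRC := by
    rw [hBe]
    refine above_or_der_rest hK hS fun C hC => ih _ ?_ A C μ rfl hA fun β hβ => hB β ?_
    · simp only [← hn, hBe, hC, List.length_append, List.length_cons]; omega
    · simp [hBe, hC, hβ]
  have c2 : RCDer A.toRC (.dia μ B.toRC) ∨ RCDer B.toRC R.toRC := by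
    rw [hAe]
    refine above_or_der_rest hH hR fun C hC => ih _ ?_ B C μ rfl hB fun β hβ => hA β ?_
    · simp only [← hn, hAe, hC, List.length_append, List.length_cons]; omega
    · simp [hAe, hC, hβ]
  rcases c1 with c1 | c1
  · exact .inr (.inl c1)
  rcases c2 with c2 | c2
  · exact .inl c2
  have hAH : RCDer A.toRC H.toRC := hAe ▸ append_der_left H R
  have hBK : RCDer B.toRC K.toRC := hBe ▸ append_der_left K S
  have c3 : Comparable (μ + 1) H K := ih _ (hn ▸ hlen) H K (μ + 1) rfl
    (fun β hβ => Order.add_one_le_of_lt (hH β hβ)) (fun β hβ => Order.add_one_le_of_lt (hK β hβ))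
  rcases c3 with h | h | ⟨h, h'⟩
  · left
    have := above_of_head hK hS (.cut hAH h) c1
    rwa [← hBe] at this
  · right; left
    have := above_of_head hH hR (.cut hBK h) c2
    rwa [← hAe] at this
  · right; right
    have h1 := RCDer.cut (.andI (.cut hAH h) c1) (der_append hS K hK)
    have h2 := RCDer.cut (.andI (.cut hBK h') c2) (der_append hR H hH)
    rw [← hBe] at h1
    rw [← hAe] at h2
    exact ⟨h1, h2⟩

/-! ### Conjunctions of worms -/

theorem rest_total {μ : Ordinal} {R S : Worm} (hR : IsRest μ R) (hS : IsRest μ S)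
    (hRμ : ∀ β ∈ R, μ ≤ β) (hSμ : ∀ β ∈ S, μ ≤ β) :
    RCDer R.toRC S.toRC ∨ RCDer S.toRC R.toRC := by
  rcases hR with rfl | ⟨C, rfl⟩
  · exact .inr (.top _)
  rcases hS with rfl | ⟨D, rfl⟩
  · exact .inl (.top _)
  rcases trichotomy _ C D μ rfl (fun β hβ => hRμ β (List.mem_cons_of_mem _ hβ))
    (fun β hβ => hSμ β (List.mem_cons_of_mem _ hβ)) with h | h | ⟨h, -⟩
  · exact .inl (.dia_trans (.refl _) h)
  · exact .inr (.dia_trans (.refl _) h)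
  · exact .inl (.nec μ h)

/-- The conjunction of two worms is a worm. That its entries come from the two given worms keeps
the conjunction of two heads above `μ`, which the induction needs. -/
theorem exists_worm_and (n : ℕ) : ∀ A B : Worm, A.length + B.length = n →
    ∃ C : Worm, (∀ γ ∈ C, γ ∈ A ∨ γ ∈ B) ∧ RCDer (.and A.toRC B.toRC) C.toRC ∧
      RCDer C.toRC A.toRC ∧ RCDer C.toRC B.toRC := by
  induction n using Nat.strong_induction_on with
  | _ n ih =>
  intro A B hn
  by_cases hne : A ++ B = []
  · obtain ⟨rfl, rfl⟩ := List.append_eq_nil_iff.1 hne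
    exact ⟨[], by simp, .top _, .refl _, .refl _⟩
  obtain ⟨μ, -, hA, hB, H, R, K, S, rfl, rfl, hH, hK, hR, hS, hlen⟩ :=
    exists_split_pair A B hne
  obtain ⟨C, hC, h1, h2, h3⟩ := ih _ (hn ▸ hlen) H K rfl
  have hCμ : ∀ γ ∈ C, μ < γ := fun γ hγ => (hC γ hγ).elim (hH γ) (hK γ)
  obtain ⟨T, hT, hTm, t1, t2, t3⟩ : ∃ T : Worm, IsRest μ T ∧ (∀ γ ∈ T, γ ∈ R ∨ γ ∈ S) ∧
      RCDer (.and R.toRC S.toRC) T.toRC ∧ RCDer T.toRC R.toRC ∧ RCDer T.toRC S.toRC := by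
    rcases rest_total hR hS (fun β hβ => hA β (List.mem_append_right _ hβ))
      (fun β hβ => hB β (List.mem_append_right _ hβ)) with h | h
    · exact ⟨R, hR, fun γ => .inl, .andL _ _, .refl _, h⟩
    · exact ⟨S, hS, fun γ => .inr, .andR _ _, h, .refl _⟩
  have hl := append_der_left C T
  have hr := append_der_right hT C hCμ
  refine ⟨C ++ T, fun γ hγ => ?_, ?_, ?_, ?_⟩
  · rcases List.mem_append.1 hγ with h | h
    · rcases hC γ h with h | h <;> simp [h]
    · rcases hTm γ h with h | h <;> simp [h]
  · have heads := RCDer.and_mono (append_der_left H R) (append_der_left K S)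
    have rests := RCDer.and_mono (append_der_right hR H hH) (append_der_right hS K hK)
    exact .cut (.andI (.cut heads h1) (.cut rests t1)) (der_append hT C hCμ)
  · exact .cut (.andI (.cut hl h2) (.cut hr t2)) (der_append hR H hH)
  · exact .cut (.andI (.cut hl h3) (.cut hr t3)) (der_append hS K hK)

theorem each_closed_formula_is_a_worm (φ : RCFormula) :
    ∃ A : Worm, RCDer φ A.toRC ∧ RCDer A.toRC φ := by
  induction φ with
  | top => exact ⟨[], .refl _, .refl _⟩
  | and φ ψ ihφ ihψ =>
    obtain ⟨A, hA, hA'⟩ := ihφ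
    obtain ⟨B, hB, hB'⟩ := ihψ
    obtain ⟨C, -, h1, h2, h3⟩ := exists_worm_and _ A B rfl
    exact ⟨C, .cut (.and_mono hA hB) h1, .andI (.cut h2 hA') (.cut h3 hB')⟩
  | dia α φ ih =>
    obtain ⟨A, hA, hA'⟩ := ih
    exact ⟨α :: A, .nec α hA, .nec α hA'⟩
end

section
/- For any ordinal α and worms A and B such that every entry of A is at least α + 1, we have A ++ (α::B) ⊢_WC α::B. -/
/-- Reflexivity is not a rule of `WCDer`; it follows from `⊤ ⊢ ⊤` by necessitation. -/
theorem WCDer.refl (A : Worm) : WCDer A A := by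
  induction A with
  | nil => exact .top []
  | cons β A ih => exact .nec β ih

theorem worm_implies_second_part (α : Ordinal) (A B : Worm)
    (hA : ∀ β ∈ A, α + 1 ≤ β) : WCDer (A ++ α :: B) (α :: B) := by
  induction A with
  | nil => exact WCDer.refl _
  | cons β A ih =>
    -- `β :: A ++ α :: B ⊢ β :: α :: B ⊢ α :: α :: B ⊢ α :: B`, using `α < β` in the middle.
    have hβ : α < β := Order.add_one_le_iff.mp (hA β List.mem_cons_self)
    have h := ih fun γ hγ => hA γ (List.mem_cons_of_mem β hγ)
    exact .cut (.nec β h) (.cut (.mono_ax _ hβ) (.trans_ax α B))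
end

section
/- For any worms A and B, if A ⊢_WC B then A ⊢_RC B (the Reflection Calculus extends the Worm Calculus). -/
/-- Repeated use of `⟨β⟩φ ∧ ⟨α⟩ψ ⊢ ⟨β⟩(φ ∧ ⟨α⟩ψ)` pushes `⟨α⟩ψ` inside every modality of `B`;
this is what makes rule (R3) of the Worm Calculus sound in the Reflection Calculus. -/
theorem RCDer.and_append {α : Ordinal} {C : Worm} (B : Worm) (hB : ∀ β ∈ B, α + 1 ≤ β) :
    RCDer (.and (Worm.toRC B) (Worm.toRC (α :: C))) (Worm.toRC (B ++ α :: C)) := by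
  induction B with
  | nil => exact .andR _ _
  | cons β B ih =>
    have hlt : α < β := Order.add_one_le_iff.mp (hB β List.mem_cons_self)
    exact .cut (.ax5 _ _ hlt) (.nec β (ih fun γ hγ => hB γ (List.mem_cons_of_mem _ hγ)))

theorem WC_implies_RC (A B : Worm) (h : WCDer A B) : RCDer A.toRC B.toRC := by
  induction h with
  | top A => exact .top _
  | trans_ax α A => exact .trans_ax _ _
  | mono_ax A h => exact .mono_ax _ h
  | cut _ _ ih₁ ih₂ => exact .cut ih₁ ih₂
  | nec α _ ih => exact .nec α ih
  | rule3 α _ _ hB ih₁ ih₂ => exact .cut (.andI ih₁ ih₂) (.and_append _ hB)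
end

section
/- Let α be an ordinal and A a nonempty worm all of whose entries are at least α. Then: (i) A ⊢_WC α::b_α(A); (ii) for any worm B, if B ⊢_WC h_{α+1}(A) and B ⊢_WC α::b_α(A), then B ⊢_WC h_{α+1}(A) ++ (α::b_α(A)); (iii) h_{α+1}(A) ++ (α::b_α(A)) ⊢_WC A; (iv) A ≡_WC h_{α+1}(A) ++ (α::b_α(A)). -/
theorem WCDer.append_left (H B : Worm) : WCDer (H ++ B) H := by
  induction H with
  | nil => exact .top _
  | cons β H ih => exact .nec β ih

/-- Entries above `α` preceding an entry `α` can be lowered to `α` and absorbed. -/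
theorem WCDer.drop_prefix (α : Ordinal) (H B : Worm) (hH : ∀ β ∈ H, α < β) :
    WCDer (H ++ α :: B) (α :: B) := by
  induction H with
  | nil => exact .refl _
  | cons β H ih =>
    have h := ih fun γ hγ => hH γ (List.mem_cons_of_mem _ hγ)
    exact ((h.nec β).cut (.mono_ax _ (hH β List.mem_cons_self))).cut (.trans_ax α B)

theorem wormHead_append_wormRem (α : Ordinal) (A : Worm) :
    wormHead α A ++ wormRem α A = A :=
  List.takeWhile_append_dropWhile

theorem le_of_mem_wormHead {α β : Ordinal} {A : Worm} (h : β ∈ wormHead α A) : α ≤ β := by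
  simpa using List.mem_takeWhile_imp h

theorem lt_of_wormRem_eq_cons {α β : Ordinal} {A B : Worm} (h : wormRem α A = β :: B) :
    β < α := by
  classical
  have := List.head?_dropWhile_not (fun β => decide (α ≤ β)) A
  unfold wormRem at h
  simpa [h] using this

theorem body_lemma (α : Ordinal) (A : Worm) (hne : A ≠ []) (hA : ∀ β ∈ A, α ≤ β) :
    WCDer A (α :: wormBody α A) ∧
    (∀ B : Worm, WCDer B (wormHead (α + 1) A) → WCDer B (α :: wormBody α A) →
      WCDer B (wormHead (α + 1) A ++ α :: wormBody α A)) ∧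
    WCDer (wormHead (α + 1) A ++ α :: wormBody α A) A ∧
    (WCDer A (wormHead (α + 1) A ++ α :: wormBody α A) ∧
      WCDer (wormHead (α + 1) A ++ α :: wormBody α A) A) := by
  have hsplit := wormHead_append_wormRem (α + 1) A
  have hhead : ∀ β ∈ wormHead (α + 1) A, α + 1 ≤ β := fun β h => le_of_mem_wormHead h
  have hlt : ∀ β ∈ wormHead (α + 1) A, α < β := fun β h =>
    Order.add_one_le_iff.mp (hhead β h)
  have h_ii : ∀ B : Worm, WCDer B (wormHead (α + 1) A) → WCDer B (α :: wormBody α A) →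
      WCDer B (wormHead (α + 1) A ++ α :: wormBody α A) :=
    fun B h₁ h₂ => .rule3 α h₁ h₂ hhead
  have h_head : WCDer A (wormHead (α + 1) A) := by
    have h := WCDer.append_left (wormHead (α + 1) A) (wormRem (α + 1) A)
    rwa [hsplit] at h
  suffices h : WCDer A (α :: wormBody α A) ∧
      WCDer (wormHead (α + 1) A ++ α :: wormBody α A) A from
    ⟨h.1, h_ii, h.2, h_ii A h_head h.1, h.2⟩
  rcases hR : wormRem (α + 1) A with _ | ⟨β, B⟩
  · have hbody : wormBody α A = [] := by simp [wormBody, hR]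
    have hH : wormHead (α + 1) A = A := by simpa [hR] using hsplit
    rw [hH] at hlt
    rw [hbody, hH]
    refine ⟨?_, .append_left A [α]⟩
    obtain ⟨γ, C, rfl⟩ := List.exists_cons_of_ne_nil hne
    exact (WCDer.mono_ax C (hlt γ List.mem_cons_self)).cut (.nec α (.top C))
  · have hbody : wormBody α A = B := by simp [wormBody, hR]
    rw [hR] at hsplit
    have hβ : β = α := le_antisymm (Order.lt_add_one_iff.mp (lt_of_wormRem_eq_cons hR))
      (hA β (by rw [← hsplit]; simp))
    rw [hβ] at hsplit
    have h_i := WCDer.drop_prefix α _ B hlt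
    rw [hbody, hsplit]
    rw [hsplit] at h_i
    exact ⟨h_i, .refl A⟩
end

section
/- For any worms A and B and any ordinal α, if h_α(A) ⊢_WC α::h_α(B) and A ⊢_WC r_α(B), then A ⊢_WC α::B. -/
theorem WCDer.append_left_s9 (X Y : Worm) : WCDer (X ++ Y) X := by
  induction X with
  | nil => exact .top _
  | cons a X ih => exact .nec a ih

theorem recursive_worm_implication_WC (A B : Worm) (α : Ordinal)
    (h1 : WCDer (wormHead α A) (α :: wormHead α B))
    (h2 : WCDer A (wormRem α B)) : WCDer A (α :: B) := by
  classical
  have headRem (C : Worm) : wormHead α C ++ wormRem α C = C := List.takeWhile_append_dropWhile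
  have hA : WCDer A (wormHead α A) := by
    have h := WCDer.append_left_s9 (wormHead α A) (wormRem α A)
    rwa [headRem] at h
  have hhead : WCDer A (α :: wormHead α B) := hA.cut h1
  have hB := headRem B
  rcases hR : wormRem α B with _ | ⟨β, C⟩
  · rw [hR, List.append_nil] at hB
    rwa [hB] at hhead
  · have hβ : β < α := by
      have h := List.head_dropWhile_not (fun γ => decide (α ≤ γ)) (l := B)
        (by rw [show B.dropWhile _ = β :: C from hR]; simp)
      simp only [show B.dropWhile (fun γ => decide (α ≤ γ)) = β :: C from hR] at h
      exact not_le.1 (of_decide_eq_false h)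
    have hge : ∀ γ ∈ α :: wormHead α B, β + 1 ≤ γ := by
      intro γ hγ
      refine (Order.add_one_le_of_lt hβ).trans ?_
      rcases List.mem_cons.1 hγ with rfl | hγ
      · exact le_rfl
      · have h := List.mem_takeWhile_imp (p := fun γ => decide (α ≤ γ)) (l := B) hγ
        exact of_decide_eq_true h
    rw [hR] at h2 hB
    have h := WCDer.rule3 β hhead h2 hge
    rwa [List.cons_append, hB] at h
end

section
/- For any ordinal α, the relation <_α on worms is irreflexive: for no worm A does A ⊢_WC α::A hold. -/
open Ordinal in
/-- The least multiple of `ω ^ e` strictly above `a`. -/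
noncomputable def nextMul (e a : Ordinal.{0}) : Ordinal.{0} :=
  ω ^ e * Order.succ (a / ω ^ e)

open Ordinal in
theorem lt_nextMul (e a : Ordinal.{0}) : a < nextMul e a :=
  lt_mul_succ_div a (opow_pos e omega0_pos).ne'

open Ordinal in
theorem dvd_nextMul (e a : Ordinal.{0}) : ω ^ e ∣ nextMul e a := ⟨_, rfl⟩

open Ordinal in
theorem nextMul_le {e e' a x : Ordinal.{0}} (h : e ≤ e') (hx : ω ^ e' ∣ x) (hax : a < x) :
    nextMul e a ≤ x := by
  obtain ⟨k, rfl⟩ := (opow_dvd_opow ω h).trans hx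
  have hpos : (ω : Ordinal.{0}) ^ e ≠ 0 := (opow_pos e omega0_pos).ne'
  exact mul_le_mul_right (Order.succ_le_of_lt ((lt_mul_iff_div_lt hpos).1 hax)) _

open Ordinal in
/-- A multiple of a higher power of `ω` above `a` is a limit of multiples of `ω ^ e`, hence is also
above the next multiple of `ω ^ e`. -/
theorem nextMul_lt {e e' a x : Ordinal.{0}} (h : e < e') (hx : ω ^ e' ∣ x) (hax : a < x) :
    nextMul e a < x := by
  obtain ⟨k, rfl⟩ := (opow_dvd_opow ω (Order.succ_le_of_lt h)).trans hx
  have hpos : (0 : Ordinal.{0}) < ω ^ e := opow_pos e omega0_pos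
  rw [opow_succ, mul_assoc] at hax ⊢
  have hk : 0 < k := by
    rcases eq_or_ne k 0 with rfl | hk
    · simp at hax
    · exact pos_iff_ne_zero.2 hk
  have hlim : Order.IsSuccLimit (ω * k) := isSuccLimit_mul_left isSuccLimit_omega0 hk
  exact (mul_lt_mul_iff_right₀ hpos).2 (hlim.succ_lt ((lt_mul_iff_div_lt hpos.ne').1 hax))

theorem nextMul_mono {e e' a a' : Ordinal.{0}} (he : e ≤ e') (ha : a ≤ a') :
    nextMul e a ≤ nextMul e' a' :=
  nextMul_le he (dvd_nextMul _ _) (ha.trans_lt (lt_nextMul _ _))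

/-- The operation on sequences of ordinals that interprets prefixing `n` to a worm. -/
noncomputable def diaSeq (n : ℕ) (a : ℕ → Ordinal.{0}) (i : ℕ) : Ordinal.{0} :=
  if i ≤ n then nextMul (diaSeq n a (i + 1)) (a i) else 0
termination_by n + 1 - i

theorem diaSeq_of_le {n i : ℕ} (a : ℕ → Ordinal.{0}) (h : i ≤ n) :
    diaSeq n a i = nextMul (diaSeq n a (i + 1)) (a i) := by
  rw [diaSeq, if_pos h]

theorem diaSeq_of_lt {n i : ℕ} (a : ℕ → Ordinal.{0}) (h : n < i) : diaSeq n a i = 0 := by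
  rw [diaSeq, if_neg (by omega)]

theorem lt_diaSeq {n i : ℕ} (a : ℕ → Ordinal.{0}) (h : i ≤ n) : a i < diaSeq n a i := by
  rw [diaSeq_of_le a h]
  exact lt_nextMul _ _

open Ordinal in
theorem diaSeq_dvd (n : ℕ) (a : ℕ → Ordinal.{0}) (i : ℕ) :
    ω ^ diaSeq n a (i + 1) ∣ diaSeq n a i := by
  rcases le_or_gt i n with h | h
  · rw [diaSeq_of_le a h]
    exact dvd_nextMul _ _
  · rw [diaSeq_of_lt a h]
    exact dvd_zero _

theorem diaSeq_mono {m n : ℕ} (h : m ≤ n) {a b : ℕ → Ordinal.{0}} (hab : ∀ i, a i ≤ b i) (i : ℕ) :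
    diaSeq m a i ≤ diaSeq n b i := by
  have key : ∀ k j, m + 1 - j = k → diaSeq m a j ≤ diaSeq n b j := by
    intro k
    induction k with
    | zero =>
      intro j hk
      rw [diaSeq_of_lt a (by omega)]
      exact zero_le
    | succ k ihk =>
      intro j hk
      rw [diaSeq_of_le a (by omega), diaSeq_of_le b (by omega)]
      exact nextMul_mono (ihk (j + 1) (by omega)) (hab j)
  exact key _ i rfl

/-- The interpretation of worms over `ℕ` by sequences of ordinals: entry `i` is the order type of
the worm with respect to `<_i`. -/
noncomputable def wormVal : List ℕ → ℕ → Ordinal.{0}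
  | [] => fun _ => 0
  | n :: A => diaSeq n (wormVal A)

open Ordinal in
theorem wormVal_dvd (A : List ℕ) (i : ℕ) : ω ^ wormVal A (i + 1) ∣ wormVal A i := by
  cases A with
  | nil => exact dvd_zero _
  | cons n A => exact diaSeq_dvd n _ i

theorem wormVal_append_of_lt {n i : ℕ} (h : n < i) (B C : List ℕ) :
    wormVal (B ++ n :: C) i = wormVal B i := by
  induction B generalizing i with
  | nil => exact diaSeq_of_lt _ h
  | cons m B ih =>
    have key : ∀ k j, n < j → m + 1 - j = k →
        diaSeq m (wormVal (B ++ n :: C)) j = diaSeq m (wormVal B) j := by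
      intro k
      induction k with
      | zero =>
        intro j _ hk
        rw [diaSeq_of_lt _ (by omega), diaSeq_of_lt _ (by omega)]
      | succ k ihk =>
        intro j hj hk
        have hjm : j ≤ m := by omega
        rw [diaSeq_of_le _ hjm, diaSeq_of_le (wormVal B) hjm, ih hj,
          ihk (j + 1) (by omega) (by omega)]
    exact key _ i h rfl

/-- At positions `i ≤ n`, the block `B` contributes only through the value at `i + 1`. -/
theorem wormVal_append_le {n i : ℕ} (h : i ≤ n) (B C : List ℕ) (hB : ∀ m ∈ B, n < m) :
    wormVal (B ++ n :: C) i ≤ nextMul (wormVal (B ++ n :: C) (i + 1)) (wormVal C i) := by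
  induction B with
  | nil => exact (diaSeq_of_le _ h).le
  | cons m B ih =>
    have hm : n < m := hB m (by simp)
    have ih := ih fun k hk => hB k (by simp [hk])
    have hlt : wormVal (B ++ n :: C) (i + 1) < wormVal (m :: (B ++ n :: C)) (i + 1) :=
      lt_diaSeq _ (by omega)
    have heq : wormVal (m :: (B ++ n :: C)) i =
        nextMul (wormVal (m :: (B ++ n :: C)) (i + 1)) (wormVal (B ++ n :: C) i) :=
      diaSeq_of_le _ (by omega)
    rw [List.cons_append, heq]
    exact nextMul_le le_rfl (dvd_nextMul _ _)
      (ih.trans_lt (nextMul_lt hlt (dvd_nextMul _ _) (lt_nextMul _ _)))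

/-- Soundness of the third rule of WC. -/
theorem wormVal_rule3 {n : ℕ} {A B C : List ℕ} (hAB : ∀ i, wormVal B i ≤ wormVal A i)
    (hAC : ∀ i, wormVal (n :: C) i ≤ wormVal A i) (hB : ∀ m ∈ B, n < m) (i : ℕ) :
    wormVal (B ++ n :: C) i ≤ wormVal A i := by
  have key : ∀ k j, n + 1 - j = k → wormVal (B ++ n :: C) j ≤ wormVal A j := by
    intro k
    induction k with
    | zero =>
      intro j hk
      rw [wormVal_append_of_lt (by omega)]
      exact hAB j
    | succ k ihk =>
      intro j hk
      have hj : j ≤ n := by omega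
      exact (wormVal_append_le hj B C hB).trans <|
        nextMul_le (ihk (j + 1) (by omega)) (wormVal_dvd A j)
          ((lt_diaSeq _ hj).trans_le (hAC j))
  exact key _ i rfl

/-- Soundness of WC for `wormVal`, after collapsing levels by any map that is strictly increasing
on the finitely many ordinals `S` occurring in the derivation. -/
theorem WCDer.exists_finset {A B : Worm} (h : WCDer A B) :
    ∃ S : Finset Ordinal, ∀ f : Ordinal → ℕ, StrictMonoOn f S →
      ∀ i, wormVal (B.map f) i ≤ wormVal (A.map f) i := by
  classical
  induction h with
  | top A => exact ⟨∅, fun f _ i => zero_le⟩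
  | trans_ax α A =>
    refine ⟨∅, fun f _ i => ?_⟩
    rcases le_or_gt i (f α) with hi | hi
    · exact (lt_diaSeq (wormVal ((α :: A).map f)) hi).le
    · exact (diaSeq_of_lt (wormVal (A.map f)) hi).trans_le zero_le
  | @mono_ax α β A hlt =>
    exact ⟨{α, β}, fun f hf i =>
      diaSeq_mono (hf (by simp) (by simp) hlt).le (fun _ => le_rfl) i⟩
  | cut _ _ ih₁ ih₂ =>
    obtain ⟨S, hS⟩ := ih₁
    obtain ⟨T, hT⟩ := ih₂
    exact ⟨S ∪ T, fun f hf i => (hT f (hf.mono (by simp)) i).trans (hS f (hf.mono (by simp)) i)⟩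
  | nec α _ ih =>
    obtain ⟨S, hS⟩ := ih
    exact ⟨S, fun f hf i => diaSeq_mono le_rfl (hS f hf) i⟩
  | @rule3 A B C α _ _ hB ih₁ ih₂ =>
    obtain ⟨S, hS⟩ := ih₁
    obtain ⟨T, hT⟩ := ih₂
    refine ⟨S ∪ T ∪ insert α B.toFinset, fun f hf i => ?_⟩
    rw [List.map_append, List.map_cons]
    refine wormVal_rule3 (hS f (hf.mono ?_)) (hT f (hf.mono ?_)) ?_ i
    · intro x hx
      simp [Finset.mem_coe.1 hx]
    · intro x hx
      simp [Finset.mem_coe.1 hx]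
    · intro m hm
      obtain ⟨β, hβ, rfl⟩ := List.mem_map.1 hm
      exact hf (by simp) (by simp [hβ]) (Order.add_one_le_iff.1 (hB β hβ))

theorem exists_strictMonoOn_nat (S : Finset Ordinal) :
    ∃ f : Ordinal → ℕ, StrictMonoOn f S := by
  classical
  refine ⟨fun x => (S.filter (· < x)).card, fun x hx y _ hxy => Finset.card_lt_card ?_⟩
  refine Finset.ssubset_iff_of_subset (fun z hz => ?_) |>.2 ⟨x, ?_, ?_⟩
  · rw [Finset.mem_filter] at hz ⊢
    exact ⟨hz.1, hz.2.trans hxy⟩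
  · simpa using ⟨hx, hxy⟩
  · simp

theorem lt_irrefl_WC (α : Ordinal) (A : Worm) : ¬ WCDer A (α :: A) := by
  intro h
  obtain ⟨S, hS⟩ := h.exists_finset
  obtain ⟨f, hf⟩ := exists_strictMonoOn_nat S
  exact (hS f hf 0).not_gt (lt_diaSeq (wormVal (A.map f)) (Nat.zero_le _))
end

section
/- Let α be an ordinal and A, B worms all of whose entries are at least α. Then A <_α B if and only if A <^RC_α B, and A ≡_WC B if and only if A ≡_RC B. -/
namespace WormProof

universe u

/-- The worm is empty or its first letter is at most `β`. -/
def LowHead (β : Ordinal.{u}) (A : Worm.{u}) : Prop := ∀ x ∈ A.head?, x ≤ β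

/-! ### Structural rules of WC -/

theorem wc_refl (A : Worm.{u}) : WCDer A A := by
  induction A with
  | nil => exact .top _
  | cons x A ih => exact .nec x ih

theorem wc_mono {α β : Ordinal.{u}} (h : β ≤ α) (A : Worm.{u}) : WCDer (α :: A) (β :: A) := by
  rcases h.lt_or_eq with h | rfl
  · exact .mono_ax _ h
  · exact wc_refl _

theorem wc_drop_tail (h r : Worm.{u}) : WCDer (h ++ r) h := by
  induction h with
  | nil => exact .top _
  | cons x h ih => exact .nec x ih

/-- A head with entries `> β` may be dropped in front of a letter `≤ β`. -/
theorem wc_drop_head {β : Ordinal.{u}} {h r : Worm.{u}} (hh : ∀ x ∈ h, β < x) (hr : LowHead β r) :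
    WCDer (h ++ r) r := by
  rcases r with _ | ⟨δ, c⟩
  · exact .top _
  have hδ : δ ≤ β := hr δ (by simp)
  induction h with
  | nil => exact wc_refl _
  | cons x h ih =>
    have hx : δ ≤ x := hδ.trans (hh x (by simp)).le
    exact ((WCDer.nec x (ih fun y hy => hh y (by simp [hy]))).cut (wc_mono hx _)).cut
      (.trans_ax _ _)

theorem wc_glue {β : Ordinal.{u}} {A h r : Worm.{u}} (hh : ∀ x ∈ h, β < x) (hr : LowHead β r)
    (h1 : WCDer A h) (h2 : WCDer A r) : WCDer A (h ++ r) := by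
  rcases r with _ | ⟨δ, c⟩
  · simpa using h1
  have hδ : δ ≤ β := hr δ (by simp)
  exact .rule3 δ h1 h2 fun x hx => Order.add_one_le_of_lt (hδ.trans_lt (hh x hx))

theorem exists_split (β : Ordinal.{u}) (A : Worm.{u}) :
    ∃ h r : Worm.{u}, A = h ++ r ∧ (∀ x ∈ h, β < x) ∧ LowHead β r := by
  induction A with
  | nil => exact ⟨[], [], rfl, by simp, by simp [LowHead]⟩
  | cons a A ih =>
    rcases le_or_gt a β with ha | ha
    · exact ⟨[], a :: A, rfl, by simp, by simpa [LowHead] using ha⟩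
    · obtain ⟨h, r, rfl, h1, h2⟩ := ih
      exact ⟨a :: h, r, rfl, by simpa using ⟨ha, h1⟩, h2⟩

theorem exists_split_min {μ : Ordinal.{u}} {A : Worm.{u}} (hA : ∀ x ∈ A, μ ≤ x) :
    ∃ h r : Worm.{u}, A = h ++ r ∧ (∀ x ∈ h, μ < x) ∧ LowHead μ r ∧
      (r = [] ∨ ∃ b, r = μ :: b) := by
  obtain ⟨h, r, rfl, h1, h2⟩ := exists_split μ A
  refine ⟨h, r, rfl, h1, h2, ?_⟩
  rcases r with _ | ⟨δ, c⟩
  · exact .inl rfl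
  · exact .inr ⟨c, by rw [le_antisymm (h2 δ (by simp)) (hA δ (by simp))]⟩

theorem exists_min {L : Worm.{u}} (hL : L ≠ []) : ∃ μ ∈ L, ∀ x ∈ L, μ ≤ x := by
  obtain ⟨m, hm, h⟩ := L.toFinset.exists_min_image id (List.toFinset_nonempty_iff _ |>.2 hL)
  exact ⟨m, by simpa using hm, fun x hx => h x (by simpa using hx)⟩

/-! ### Linearity of the worm orders -/

theorem trichotomy_aux (n : ℕ) : ∀ (α : Ordinal.{u}) (A B : Worm.{u}), A.length + B.length < n →
    (∀ x ∈ A, α ≤ x) → (∀ x ∈ B, α ≤ x) →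
    WCDer A (α :: B) ∨ WCDer B (α :: A) ∨ (WCDer A B ∧ WCDer B A) := by
  induction n with
  | zero => intro _ _ _ h; omega
  | succ n ih =>
  intro α A B hlen hA hB
  by_cases hne : A ++ B = []
  · obtain ⟨rfl, rfl⟩ := List.append_eq_nil_iff.1 hne
    exact .inr (.inr ⟨.top _, .top _⟩)
  obtain ⟨μ, hμ, hmin⟩ := exists_min hne
  have hαμ : α ≤ μ := (List.mem_append.1 hμ).elim (hA μ) (hB μ)
  -- It suffices to compare the worms at their least entry.
  suffices H : WCDer A (μ :: B) ∨ WCDer B (μ :: A) ∨ (WCDer A B ∧ WCDer B A) by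
    rcases H with H | H | H
    · exact .inl (H.cut (wc_mono hαμ _))
    · exact .inr (.inl (H.cut (wc_mono hαμ _)))
    · exact .inr (.inr H)
  have hA' : ∀ x ∈ A, μ ≤ x := fun x hx => hmin x (by simp [hx])
  have hB' : ∀ x ∈ B, μ ≤ x := fun x hx => hmin x (by simp [hx])
  -- A worm `h ++ r` either proves `μ :: C`, or its remainder `r` is provable from `C`.
  have key : ∀ (h r C : Worm.{u}), (∀ x ∈ h, μ < x) → LowHead μ r → (r = [] ∨ ∃ b, r = μ :: b) →
      (∀ x ∈ h ++ r, μ ≤ x) → (∀ x ∈ C, μ ≤ x) → (h ++ r).length + C.length < n + 1 →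
      WCDer (h ++ r) (μ :: C) ∨ WCDer C r := by
    intro h r C hh hlow hr hhr hC hl
    rcases hr with rfl | ⟨b, rfl⟩
    · exact .inr (.top _)
    have hs : WCDer (h ++ μ :: b) (μ :: b) := wc_drop_head hh hlow
    rcases ih μ b C (by simp at hl; omega) (fun x hx => hhr x (by simp [hx])) hC with H | H | H
    · exact .inl ((hs.cut (.nec μ H)).cut (.trans_ax _ _))
    · exact .inr H
    · exact .inl (hs.cut (.nec μ H.1))
  obtain ⟨h, r, rfl, hh, hlow, hr⟩ := exists_split_min hA'
  obtain ⟨h', r', rfl, hh', hlow', hr'⟩ := exists_split_min hB'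
  rcases key h r (h' ++ r') hh hlow hr hA' hB' hlen with H | H1
  · exact .inl H
  rcases key h' r' (h ++ r) hh' hlow' hr' hB' hA' (by omega) with H | H2
  · exact .inr (.inl H)
  have hlt : h.length + h'.length < n := by
    have : 0 < r.length + r'.length := by
      by_contra hc
      have h1 : r = [] := List.length_eq_zero_iff.1 (by omega)
      have h2 : r' = [] := List.length_eq_zero_iff.1 (by omega)
      subst h1 h2
      simp only [List.append_nil, List.mem_append] at hμ
      rcases hμ with hμ | hμ
      · exact lt_irrefl _ (hh _ hμ)
      · exact lt_irrefl _ (hh' _ hμ)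
    simp only [List.length_append] at hlen
    omega
  rcases ih (μ + 1) h h' hlt (fun x hx => Order.add_one_le_of_lt (hh x hx))
    (fun x hx => Order.add_one_le_of_lt (hh' x hx)) with H | H | H
  · left
    have : WCDer (h ++ r) (((μ + 1) :: h') ++ r') :=
      wc_glue (β := μ) (by simpa using hh') hlow' ((wc_drop_tail _ _).cut H) H2
    exact this.cut (wc_mono (lt_add_one μ |>.le) _)
  · right; left
    have : WCDer (h' ++ r') (((μ + 1) :: h) ++ r) :=
      wc_glue (β := μ) (by simpa using hh) hlow ((wc_drop_tail _ _).cut H) H1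
    exact this.cut (wc_mono (lt_add_one μ |>.le) _)
  · right; right
    exact ⟨wc_glue hh' hlow' ((wc_drop_tail _ _).cut H.1) H2,
      wc_glue hh hlow ((wc_drop_tail _ _).cut H.2) H1⟩

theorem trichotomy {α : Ordinal.{u}} {A B : Worm.{u}} (hA : ∀ x ∈ A, α ≤ x)
    (hB : ∀ x ∈ B, α ≤ x) :
    WCDer A (α :: B) ∨ WCDer B (α :: A) ∨ (WCDer A B ∧ WCDer B A) :=
  trichotomy_aux _ α A B (Nat.lt_succ_self _) hA hB

theorem cons_total {α : Ordinal.{u}} {A B : Worm.{u}} (hA : ∀ x ∈ A, α ≤ x)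
    (hB : ∀ x ∈ B, α ≤ x) : WCDer (α :: A) (α :: B) ∨ WCDer (α :: B) (α :: A) := by
  rcases trichotomy hA hB with H | H | H
  · exact .inl ((WCDer.nec α H).cut (.trans_ax _ _))
  · exact .inr ((WCDer.nec α H).cut (.trans_ax _ _))
  · exact .inl (.nec α H.1)

/-! ### Meets of worms -/

/-- `M` is a greatest lower bound of `A` and `B` in WC. -/
structure IsMeet (M A B : Worm.{u}) : Prop where
  left : WCDer M A
  right : WCDer M B
  glb : ∀ C, WCDer C A → WCDer C B → WCDer C M

/-- The entry and first-letter conditions are what the induction and the third modal axiom of RC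
need, respectively. -/
theorem exists_meet_aux (n : ℕ) : ∀ A B : Worm.{u}, A.length + B.length < n →
    ∃ M, IsMeet M A B ∧ (∀ x ∈ M, x ∈ A ∨ x ∈ B) ∧
      ∀ β, LowHead β A → LowHead β B → LowHead β M := by
  induction n with
  | zero => intro _ _ h; omega
  | succ n ih =>
  intro A B hlen
  by_cases hne : A ++ B = []
  · obtain ⟨rfl, rfl⟩ := List.append_eq_nil_iff.1 hne
    exact ⟨[], ⟨.top _, .top _, fun _ h _ => h⟩, by simp, fun _ h _ => h⟩
  obtain ⟨μ, hμ, hmin⟩ := exists_min hne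
  have hA : ∀ x ∈ A, μ ≤ x := fun x hx => hmin x (by simp [hx])
  have hB : ∀ x ∈ B, μ ≤ x := fun x hx => hmin x (by simp [hx])
  have hμβ : ∀ β, LowHead β A → LowHead β B → μ ≤ β := by
    intro β h1 h2
    rcases A with _ | ⟨a, A⟩
    · rcases B with _ | ⟨b, B⟩
      · simp at hne
      · exact (hB b (by simp)).trans (h2 b (by simp))
    · exact (hA a (by simp)).trans (h1 a (by simp))
  obtain ⟨h, r, rfl, hh, hlow, hr⟩ := exists_split_min hA
  obtain ⟨h', r', rfl, hh', hlow', hr'⟩ := exists_split_min hB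
  have hlt : h.length + h'.length < n := by
    have : 0 < r.length + r'.length := by
      by_contra hc
      have h1 : r = [] := List.length_eq_zero_iff.1 (by omega)
      have h2 : r' = [] := List.length_eq_zero_iff.1 (by omega)
      subst h1 h2
      simp only [List.append_nil, List.mem_append] at hμ
      rcases hμ with hμ | hμ
      · exact lt_irrefl _ (hh _ hμ)
      · exact lt_irrefl _ (hh' _ hμ)
    simp only [List.length_append] at hlen
    omega
  obtain ⟨M, hM, hMmem, hMlow⟩ := ih h h' hlt
  have hMμ : ∀ x ∈ M, μ < x := fun x hx => (hMmem x hx).elim (hh x) (hh' x)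
  -- The remainders `r`, `r'` are comparable, so their meet is one of them.
  obtain ⟨s, hs, hsmem, hslow⟩ : ∃ s, IsMeet s r r' ∧ (∀ x ∈ s, x ∈ r ∨ x ∈ r') ∧
      LowHead μ s := by
    have htot : WCDer r r' ∨ WCDer r' r := by
      rcases hr with rfl | ⟨b, rfl⟩
      · exact .inr (.top _)
      rcases hr' with rfl | ⟨b', rfl⟩
      · exact .inl (.top _)
      exact cons_total (fun x hx => hA x (by simp [hx])) (fun x hx => hB x (by simp [hx]))
    rcases htot with H | H
    · exact ⟨r, ⟨wc_refl _, H, fun _ h _ => h⟩, fun x hx => .inl hx, hlow⟩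
    · exact ⟨r', ⟨H, wc_refl _, fun _ _ h => h⟩, fun x hx => .inr hx, hlow'⟩
  have p1 : WCDer (M ++ s) M := wc_drop_tail _ _
  have p2 : WCDer (M ++ s) s := wc_drop_head hMμ hslow
  refine ⟨M ++ s, ⟨?_, ?_, ?_⟩, ?_, ?_⟩
  · exact wc_glue hh hlow (p1.cut hM.left) (p2.cut hs.left)
  · exact wc_glue hh' hlow' (p1.cut hM.right) (p2.cut hs.right)
  · intro C hC hC'
    refine wc_glue hMμ hslow (hM.glb C (hC.cut (wc_drop_tail _ _)) (hC'.cut (wc_drop_tail _ _)))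
      (hs.glb C (hC.cut (wc_drop_head hh hlow)) (hC'.cut (wc_drop_head hh' hlow')))
  · intro x hx
    rcases List.mem_append.1 hx with hx | hx
    · rcases hMmem x hx with hx | hx <;> simp [hx]
    · rcases hsmem x hx with hx | hx <;> simp [hx]
  · intro β h1 h2
    have hle := hμβ β h1 h2
    have aux : ∀ k t : Worm.{u}, LowHead β (k ++ t) → LowHead β k := by
      intro k t hk
      rcases k with _ | ⟨y, k⟩
      · simp [LowHead]
      · simpa [LowHead] using hk
    have hM' := hMlow β (aux _ _ h1) (aux _ _ h2)
    rcases M with _ | ⟨y, M⟩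
    · exact fun x hx => (hslow x hx).trans hle
    · simpa [LowHead] using hM'

theorem exists_meet (A B : Worm.{u}) :
    ∃ M, IsMeet M A B ∧ ∀ β, LowHead β A → LowHead β B → LowHead β M := by
  obtain ⟨M, h1, -, h2⟩ := exists_meet_aux _ A B (Nat.lt_succ_self _)
  exact ⟨M, h1, h2⟩

/-- A worm that is a greatest lower bound of `A` and `B`; unique only up to WC-equivalence. -/
noncomputable def meet (A B : Worm.{u}) : Worm.{u} := (exists_meet A B).choose

theorem meet_isMeet (A B : Worm.{u}) : IsMeet (meet A B) A B := (exists_meet A B).choose_spec.1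

theorem meet_lowHead {A B : Worm.{u}} {β : Ordinal.{u}} (hA : LowHead β A) (hB : LowHead β B) :
    LowHead β (meet A B) := (exists_meet A B).choose_spec.2 β hA hB

/-- The WC form of `⟨α⟩φ ∧ ⟨β⟩ψ ⊢ ⟨α⟩(φ ∧ ⟨β⟩ψ)`. -/
theorem meet_ax5 {α β : Ordinal.{u}} (hβ : β < α) (A B : Worm.{u}) :
    WCDer (meet (α :: A) (β :: B)) (α :: meet A (β :: B)) := by
  have hD := meet_isMeet (α :: A) (β :: B)
  obtain ⟨h, r, rfl, hh, hr⟩ := exists_split β A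
  have hF := meet_isMeet r (β :: B)
  have hFlow : LowHead β (meet r (β :: B)) := meet_lowHead hr (by simp [LowHead])
  have hαh : ∀ x ∈ α :: h, β < x := by simpa using ⟨hβ, hh⟩
  have h1 : WCDer (meet (α :: (h ++ r)) (β :: B)) (α :: h) := hD.left.cut (wc_drop_tail (α :: h) r)
  have h2 : WCDer (meet (α :: (h ++ r)) (β :: B)) r := hD.left.cut (wc_drop_head hαh hr)
  -- `h ++ F`, with `F` the meet of `r` and `β :: B`, lies below both `h ++ r` and `β :: B`.
  refine (wc_glue hαh hFlow h1 (hF.glb _ h2 hD.right)).cut (.nec α ?_)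
  have p := wc_drop_head hh hFlow
  exact (meet_isMeet _ _).glb _ (wc_glue hh hr (wc_drop_tail _ _) (p.cut hF.left)) (p.cut hF.right)

/-! ### Translations between RC and WC -/

/-- The worm translation of a closed formula, with `∧` interpreted by `meet`. -/
noncomputable def toWorm : RCFormula → Worm.{0}
  | .top => []
  | .and φ ψ => meet (toWorm φ) (toWorm ψ)
  | .dia α φ => α :: toWorm φ

theorem toWorm_toRC (A : Worm.{0}) : toWorm A.toRC = A := by
  induction A with
  | nil => rfl
  | cons x A ih => simp [Worm.toRC, toWorm, ih]

theorem toWorm_sound {φ ψ : RCFormula} (h : RCDer φ ψ) : WCDer (toWorm φ) (toWorm ψ) := by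
  induction h with
  | refl φ => exact wc_refl _
  | top φ => exact .top _
  | andL φ ψ => exact (meet_isMeet _ _).left
  | andR φ ψ => exact (meet_isMeet _ _).right
  | trans_ax α φ => exact .trans_ax _ _
  | mono_ax φ h => exact .mono_ax _ h
  | ax5 φ ψ h => exact meet_ax5 h _ _
  | cut _ _ h1 h2 => exact h1.cut h2
  | andI _ _ h1 h2 => exact (meet_isMeet _ _).glb _ h1 h2
  | nec α _ h => exact .nec α h

theorem rc_glue {α : Ordinal.{0}} {C : Worm.{0}} (B : Worm.{0}) (hB : ∀ x ∈ B, α + 1 ≤ x) :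
    RCDer (.and B.toRC (Worm.toRC (α :: C))) (Worm.toRC (B ++ α :: C)) := by
  induction B with
  | nil => exact .andR _ _
  | cons x B ih =>
    exact (RCDer.ax5 _ _ (Order.add_one_le_iff.1 (hB x (by simp)))).cut
      (.nec x (ih fun y hy => hB y (by simp [hy])))

theorem rc_of_wc {A B : Worm.{0}} (h : WCDer A B) : RCDer A.toRC B.toRC := by
  induction h with
  | top A => exact .top _
  | trans_ax α A => exact .trans_ax _ _
  | mono_ax A h => exact .mono_ax _ h
  | cut _ _ h1 h2 => exact h1.cut h2
  | nec α _ h => exact .nec α h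
  | rule3 α _ _ hB h1 h2 => exact (RCDer.andI h1 h2).cut (rc_glue _ hB)

theorem wc_iff_rc (A B : Worm.{0}) : WCDer A B ↔ RCDer A.toRC B.toRC :=
  ⟨rc_of_wc, fun h => by simpa only [toWorm_toRC] using toWorm_sound h⟩

end WormProof

theorem lt_WC_iff_lt_RC (α : Ordinal) (A B : Worm)
    (hA : ∀ β ∈ A, α ≤ β) (hB : ∀ β ∈ B, α ≤ β) :
    (WCDer B (α :: A) ↔ RCDer B.toRC (Worm.toRC (α :: A))) ∧
    ((WCDer A B ∧ WCDer B A) ↔ (RCDer A.toRC B.toRC ∧ RCDer B.toRC A.toRC)) := 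
  ⟨WormProof.wc_iff_rc _ _,
    and_congr (WormProof.wc_iff_rc _ _) (WormProof.wc_iff_rc _ _)⟩
end

section
/- Let U be a Euclidean universal Kripke model for the Worm Calculus WC and x a point of U. If x ⊩ A for a worm A all of whose entries are at least α + 1, and x ⊩ α::B for a worm B, then x ⊩ A ++ (α::B). -/
theorem semantical_big_worm_eats_small (M : KripkeModel)
    (hEuc : M.Euclidean) (hUniv : M.UniversalWC) (x : M.W)
    (α : Ordinal) (A B : Worm) (hA : ∀ β ∈ A, α + 1 ≤ β)
    (h1 : M.forces x A) (h2 : M.forces x (α :: B)) :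
    M.forces x (A ++ α :: B) := by
  induction A generalizing x with
  | nil => exact h2
  | cons β A ih =>
    obtain ⟨y, hxy, hy⟩ := h1
    obtain ⟨z, hxz, hz⟩ := h2
    have hlt : α < β := Order.add_one_le_iff.mp (hA β List.mem_cons_self)
    -- The Euclidean property carries the `α`-successor `z` of `x` over to `y`, so `y ⊩ α :: B`.
    exact ⟨y, hxy, ih y (fun γ hγ => hA γ (List.mem_cons_of_mem β hγ)) hy
      ⟨z, hEuc hlt hxy hxz, hz⟩⟩
end

section
/- Let U be a Euclidean universal Kripke model for the Worm Calculus WC and x a point of U. Let A, B, C be worms such that the RC⁰ formula A ∧ B is equivalent in RC to C (A ∧ B ≡_RC C). Then x ⊩ A and x ⊩ B if and only if x ⊩ C. -/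
/-! ### Entailment between worms in the model -/

namespace KripkeModel

variable {M : KripkeModel}

/-- `A` entails `B` in `M`: every point forcing `A` forces `B`. -/
def Ent (M : KripkeModel) (A B : Worm) : Prop :=
  ∀ x : M.W, M.forces x A → M.forces x B

theorem Ent.cons {A B : Worm} (h : M.Ent A B) (α : Ordinal) : M.Ent (α :: A) (α :: B) := by
  rintro x ⟨y, hxy, hy⟩
  exact ⟨y, hxy, h y hy⟩

theorem ent_trans (hU : M.UniversalWC) (α : Ordinal) (A : Worm) :
    M.Ent (α :: α :: A) (α :: A) :=
  (hU _ _).1 (.trans_ax α A)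

theorem ent_mono (hU : M.UniversalWC) {α β : Ordinal} (h : β ≤ α) (A : Worm) :
    M.Ent (α :: A) (β :: A) := by
  rcases h.eq_or_lt with rfl | h
  · exact fun _ hx => hx
  · exact (hU _ _).1 (.mono_ax A h)

/-- If all entries of `H` exceed `α`, then `H ++ α :: C` is, in the model, the conjunction of `H` and
`α :: C`; the direction from right to left is the Euclidean property. -/
theorem forces_append_iff (hE : M.Euclidean) (hU : M.UniversalWC) {α : Ordinal} {H : Worm}
    (hH : ∀ β ∈ H, α < β) (C : Worm) (x : M.W) :
    M.forces x (H ++ α :: C) ↔ M.forces x H ∧ M.forces x (α :: C) := by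
  induction H generalizing x with
  | nil => exact ⟨fun h => ⟨trivial, h⟩, fun h => h.2⟩
  | cons β H ih =>
    have hβ : α < β := hH β (by simp)
    have ih := ih (fun γ hγ => hH γ (by simp [hγ]))
    constructor
    · rintro ⟨y, hxy, hy⟩
      obtain ⟨h1, h2⟩ := (ih y).1 hy
      exact ⟨⟨y, hxy, h1⟩, ent_trans hU α C x (ent_mono hU hβ.le _ x ⟨y, hxy, h2⟩)⟩
    · rintro ⟨⟨y, hxy, hy⟩, ⟨z, hxz, hz⟩⟩
      exact ⟨y, hxy, (ih y).2 ⟨hy, z, hE hβ hxy hxz, hz⟩⟩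

/-! ### Trichotomy -/

/-- The three ways in which two worms may be related by the order at level `α`. -/
def Comparable (M : KripkeModel) (α : Ordinal) (A B : Worm) : Prop :=
  M.Ent A (α :: B) ∨ M.Ent B (α :: A) ∨ (M.Ent A B ∧ M.Ent B A)

theorem Comparable.symm {α : Ordinal} {A B : Worm} (h : M.Comparable α A B) :
    M.Comparable α B A := by
  rcases h with h | h | h
  · exact .inr (.inl h)
  · exact .inl h
  · exact .inr (.inr h.symm)

theorem Comparable.mono (hU : M.UniversalWC) {α β : Ordinal} {A B : Worm} (hβ : β ≤ α)
    (h : M.Comparable α A B) : M.Comparable β A B := by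
  rcases h with h | h | h
  · exact .inl fun x hx => ent_mono hU hβ _ x (h x hx)
  · exact .inr (.inl fun x hx => ent_mono hU hβ _ x (h x hx))
  · exact .inr (.inr h)

/-- Either `μ` does not occur in `A`, or `A` splits at the first occurrence of `μ`. -/
theorem worm_split {μ : Ordinal} {A : Worm} (hA : ∀ β ∈ A, μ ≤ β) :
    (∀ β ∈ A, μ < β) ∨ ∃ H A' : Worm, A = H ++ μ :: A' ∧ (∀ β ∈ H, μ < β) ∧ ∀ β ∈ A', μ ≤ β := by
  by_cases h : μ ∈ A
  · obtain ⟨H, A', rfl, hH⟩ := List.eq_append_cons_of_mem h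
    refine .inr ⟨H, A', rfl, fun β hβ => ?_, fun β hβ => hA β (by simp [hβ])⟩
    exact lt_of_le_of_ne (hA β (by simp [hβ])) fun e => hH (e ▸ hβ)
  · exact .inl fun β hβ => lt_of_le_of_ne (hA β hβ) fun e => h (e ▸ hβ)

theorem exists_min {L : Worm} (hL : L ≠ []) : ∃ μ ∈ L, ∀ β ∈ L, μ ≤ β := by
  obtain ⟨μ, h1, h2⟩ := L.toFinset.exists_min_image id (by simpa using hL)
  exact ⟨μ, by simpa using h1, fun β hβ => h2 β (by simpa using hβ)⟩

/-- A worm `A` that is at most the `μ`-body `B'` of a worm `B` is below `B`. -/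
theorem ent_of_body (hE : M.Euclidean) (hU : M.UniversalWC) {μ : Ordinal} {A K B' : Worm}
    (hK : ∀ β ∈ K, μ < β) (h : M.Ent B' (μ :: A) ∨ M.Ent B' A) :
    M.Ent (K ++ μ :: B') (μ :: A) := by
  intro x hx
  have hx := ((forces_append_iff hE hU hK _ x).1 hx).2
  rcases h with h | h
  · exact ent_trans hU _ _ x (h.cons μ x hx)
  · exact h.cons μ x hx

/-- If `A` is above the `μ`-body of `K ++ μ :: B'` and entails `γ :: K` with `μ < γ`, then it is
above the whole worm. -/
theorem ent_of_head (hE : M.Euclidean) (hU : M.UniversalWC) {μ γ : Ordinal} {A K B' : Worm}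
    (hγ : μ < γ) (hK : ∀ β ∈ K, μ < β) (h1 : M.Ent A (γ :: K)) (h2 : M.Ent A (μ :: B')) :
    M.Ent A (μ :: (K ++ μ :: B')) := by
  intro x hx
  have hK' : ∀ β ∈ γ :: K, μ < β := by simpa using ⟨hγ, hK⟩
  exact ent_mono hU hγ.le _ x ((forces_append_iff hE hU hK' B' x).2 ⟨h1 x hx, h2 x hx⟩)

theorem trichotomy (hE : M.Euclidean) (hU : M.UniversalWC) (n : ℕ) :
    ∀ (α : Ordinal) (A B : Worm), A.length + B.length = n → (∀ β ∈ A, α ≤ β) → (∀ β ∈ B, α ≤ β) →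
      M.Comparable α A B := by
  induction n using Nat.strong_induction_on with
  | _ n ih =>
  -- The case where the level is attained in the first worm.
  have key : ∀ (μ : Ordinal) (A B : Worm), A.length + B.length = n → (∀ β ∈ A, μ ≤ β) →
      (∀ β ∈ B, μ ≤ β) → μ ∈ A → M.Comparable μ A B := by
    intro μ A B hn hA hB hμ
    have hγ : μ < μ + 1 := by simp
    rcases worm_split hA with h | ⟨H, A', rfl, hH, hA'⟩
    · exact absurd (h μ hμ) (lt_irrefl _)
    have happ := fun x => forces_append_iff hE hU hH A' x
    simp only [List.length_append, List.length_cons] at hn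
    rcases ih (B.length + A'.length) (by omega) μ B A' rfl hB hA' with hBA | hBA | ⟨-, hBA⟩
    rotate_left
    · exact .inl (ent_of_body hE hU hH (.inl hBA))
    · exact .inl (ent_of_body hE hU hH (.inr hBA))
    rcases worm_split hB with hB' | ⟨K, B', rfl, hK, hB'⟩
    · rcases ih (H.length + B.length) (by omega) (μ + 1) H B rfl
        (fun β hβ => Order.add_one_le_of_lt (hH β hβ))
        (fun β hβ => Order.add_one_le_of_lt (hB' β hβ)) with h | h | ⟨h, h'⟩
      · exact .inl fun x hx => ent_mono hU hγ.le _ x (h x ((happ x).1 hx).1)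
      · exact .inr (.inl (ent_of_head hE hU hγ hH h hBA))
      · exact .inr (.inr ⟨fun x hx => h x ((happ x).1 hx).1,
          fun x hx => (happ x).2 ⟨h' x hx, hBA x hx⟩⟩)
    · have happ' := fun x => forces_append_iff hE hU hK B' x
      simp only [List.length_append, List.length_cons] at hn
      rcases ih ((H ++ μ :: A').length + B'.length) (by simp; omega) μ (H ++ μ :: A') B' rfl hA hB'
        with hAB | hAB | ⟨-, hAB⟩
      rotate_left
      · exact .inr (.inl (ent_of_body hE hU hK (.inl hAB)))
      · exact .inr (.inl (ent_of_body hE hU hK (.inr hAB)))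
      rcases ih (H.length + K.length) (by omega) (μ + 1) H K rfl
        (fun β hβ => Order.add_one_le_of_lt (hH β hβ))
        (fun β hβ => Order.add_one_le_of_lt (hK β hβ)) with h | h | ⟨h, h'⟩
      · exact .inl (ent_of_head hE hU hγ hK (fun x hx => h x ((happ x).1 hx).1) hAB)
      · exact .inr (.inl (ent_of_head hE hU hγ hH (fun x hx => h x ((happ' x).1 hx).1) hBA))
      · exact .inr (.inr ⟨fun x hx => (happ' x).2 ⟨h x ((happ x).1 hx).1, hAB x hx⟩,
          fun x hx => (happ x).2 ⟨h' x ((happ' x).1 hx).1, hBA x hx⟩⟩)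
  intro α A B hn hA hB
  by_cases hL : A ++ B = []
  · obtain ⟨rfl, rfl⟩ := List.append_eq_nil_iff.1 hL
    exact .inr (.inr ⟨fun _ h => h, fun _ h => h⟩)
  obtain ⟨μ, hμ, hmin⟩ := exists_min hL
  have hA' : ∀ β ∈ A, μ ≤ β := fun β hβ => hmin β (by simp [hβ])
  have hB' : ∀ β ∈ B, μ ≤ β := fun β hβ => hmin β (by simp [hβ])
  rcases List.mem_append.1 hμ with h | h
  · exact (key μ A B hn hA' hB' h).mono hU (hA μ h)
  · exact ((key μ B A (by omega) hB' hA' h).mono hU (hB μ h)).symm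

/-! ### Conjunctions of worms -/

/-- Of two worms with entries at least `μ`, prefixed by `μ`, one entails the other. -/
theorem ent_total (hE : M.Euclidean) (hU : M.UniversalWC) {μ : Ordinal} {A B : Worm}
    (hA : ∀ β ∈ A, μ ≤ β) (hB : ∀ β ∈ B, μ ≤ β) :
    M.Ent (μ :: A) (μ :: B) ∨ M.Ent (μ :: B) (μ :: A) := by
  rcases trichotomy hE hU _ μ A B rfl hA hB with h | h | h
  · exact .inl fun x hx => ent_trans hU _ _ x (h.cons μ x hx)
  · exact .inr fun x hx => ent_trans hU _ _ x (h.cons μ x hx)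
  · exact .inl (h.1.cons μ)

/-- The conjunction of two worms is equivalent in the model to a worm. The bound on the entries
serves the recursion: the conjunction of the heads must again have entries above `μ`. -/
theorem exists_conj (hE : M.Euclidean) (hU : M.UniversalWC) (n : ℕ) :
    ∀ (α : Ordinal) (A B : Worm), A.length + B.length = n → (∀ β ∈ A, α ≤ β) → (∀ β ∈ B, α ≤ β) →
      ∃ D : Worm, (∀ β ∈ D, α ≤ β) ∧ ∀ x, M.forces x D ↔ M.forces x A ∧ M.forces x B := by
  induction n using Nat.strong_induction_on with
  | _ n ih =>
  have key : ∀ (μ : Ordinal) (A B : Worm), A.length + B.length = n → (∀ β ∈ A, μ ≤ β) →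
      (∀ β ∈ B, μ ≤ β) → μ ∈ A →
      ∃ D : Worm, (∀ β ∈ D, μ ≤ β) ∧ ∀ x, M.forces x D ↔ M.forces x A ∧ M.forces x B := by
    intro μ A B hn hA hB hμ
    have hγ : μ < μ + 1 := by simp
    rcases worm_split hA with h | ⟨H, A', rfl, hH, hA'⟩
    · exact absurd (h μ hμ) (lt_irrefl _)
    have happ := fun x => forces_append_iff hE hU hH A' x
    simp only [List.length_append, List.length_cons] at hn
    have mem : ∀ {D C : Worm}, (∀ β ∈ D, μ + 1 ≤ β) → (∀ β ∈ C, μ ≤ β) →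
        ∀ β ∈ D ++ μ :: C, μ ≤ β := by
      intro D C hD hC β hβ
      simp only [List.mem_append, List.mem_cons] at hβ
      rcases hβ with h | rfl | h
      · exact hγ.le.trans (hD β h)
      · exact le_rfl
      · exact hC β h
    rcases worm_split hB with hB' | ⟨K, B', rfl, hK, hB'⟩
    · obtain ⟨D, hD, hDx⟩ := ih (H.length + B.length) (by omega) (μ + 1) H B rfl
        (fun β hβ => Order.add_one_le_of_lt (hH β hβ))
        (fun β hβ => Order.add_one_le_of_lt (hB' β hβ))
      refine ⟨D ++ μ :: A', mem hD hA', fun x => ?_⟩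
      rw [forces_append_iff hE hU (fun β hβ => hγ.trans_le (hD β hβ)), happ, hDx]
      tauto
    · have happ' := fun x => forces_append_iff hE hU hK B' x
      simp only [List.length_append, List.length_cons] at hn
      obtain ⟨D, hD, hDx⟩ := ih (H.length + K.length) (by omega) (μ + 1) H K rfl
        (fun β hβ => Order.add_one_le_of_lt (hH β hβ))
        (fun β hβ => Order.add_one_le_of_lt (hK β hβ))
      rcases ent_total hE hU hA' hB' with h | h
      · refine ⟨D ++ μ :: A', mem hD hA', fun x => ?_⟩
        rw [forces_append_iff hE hU (fun β hβ => hγ.trans_le (hD β hβ)), happ, happ', hDx]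
        have := h x
        tauto
      · refine ⟨D ++ μ :: B', mem hD hB', fun x => ?_⟩
        rw [forces_append_iff hE hU (fun β hβ => hγ.trans_le (hD β hβ)), happ, happ', hDx]
        have := h x
        tauto
  intro α A B hn hA hB
  by_cases hL : A ++ B = []
  · obtain ⟨rfl, rfl⟩ := List.append_eq_nil_iff.1 hL
    exact ⟨[], by simp, fun x => (and_self_iff).symm⟩
  obtain ⟨μ, hμ, hmin⟩ := exists_min hL
  have hA' : ∀ β ∈ A, μ ≤ β := fun β hβ => hmin β (by simp [hβ])
  have hB' : ∀ β ∈ B, μ ≤ β := fun β hβ => hmin β (by simp [hβ])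
  rcases List.mem_append.1 hμ with h | h
  · obtain ⟨D, hD, hDx⟩ := key μ A B hn hA' hB' h
    exact ⟨D, fun β hβ => (hA μ h).trans (hD β hβ), hDx⟩
  · obtain ⟨D, hD, hDx⟩ := key μ B A (by omega) hB' hA' h
    exact ⟨D, fun β hβ => (hB μ h).trans (hD β hβ), fun x => (hDx x).trans and_comm⟩

/-! ### Soundness of RC⁰ -/

/-- Forcing extended from worms to all formulas of RC⁰. -/
def forcesRC (M : KripkeModel) : M.W → RCFormula → Prop
  | _, .top => True
  | x, .and φ ψ => M.forcesRC x φ ∧ M.forcesRC x ψ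
  | x, .dia α φ => ∃ y, M.R α x y ∧ M.forcesRC y φ

theorem forcesRC_toRC (A : Worm) (x : M.W) : M.forcesRC x A.toRC ↔ M.forces x A := by
  induction A generalizing x with
  | nil => exact Iff.rfl
  | cons α A ih => simp only [Worm.toRC, forcesRC, forces, ih]

theorem exists_worm (hE : M.Euclidean) (hU : M.UniversalWC) (φ : RCFormula) :
    ∃ D : Worm, ∀ x, M.forcesRC x φ ↔ M.forces x D := by
  induction φ with
  | top => exact ⟨[], fun _ => Iff.rfl⟩
  | and φ ψ ih₁ ih₂ =>
    obtain ⟨A, hA⟩ := ih₁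
    obtain ⟨B, hB⟩ := ih₂
    obtain ⟨D, -, hD⟩ := exists_conj hE hU _ 0 A B rfl (by simp) (by simp)
    exact ⟨D, fun x => by rw [hD, forcesRC, hA, hB]⟩
  | dia α φ ih =>
    obtain ⟨A, hA⟩ := ih
    exact ⟨α :: A, fun x => by simp only [forcesRC, forces, hA]⟩

theorem soundRC (hE : M.Euclidean) (hU : M.UniversalWC) {φ ψ : RCFormula} (h : RCDer φ ψ) :
    ∀ x, M.forcesRC x φ → M.forcesRC x ψ := by
  induction h with
  | refl φ => exact fun _ h => h
  | top φ => exact fun _ _ => trivial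
  | andL φ ψ => exact fun _ h => h.1
  | andR φ ψ => exact fun _ h => h.2
  | trans_ax α φ =>
    obtain ⟨D, hD⟩ := exists_worm hE hU φ
    simp only [forcesRC, hD]
    exact ent_trans hU α D
  | mono_ax φ hβ =>
    obtain ⟨D, hD⟩ := exists_worm hE hU φ
    simp only [forcesRC, hD]
    exact ent_mono hU hβ.le D
  | ax5 φ ψ hβ =>
    rintro x ⟨⟨y, hxy, hy⟩, ⟨z, hxz, hz⟩⟩
    exact ⟨y, hxy, hy, z, hE hβ hxy hxz, hz⟩
  | cut _ _ ih₁ ih₂ => exact fun x hx => ih₂ x (ih₁ x hx)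
  | andI _ _ ih₁ ih₂ => exact fun x hx => ⟨ih₁ x hx, ih₂ x hx⟩
  | nec α _ ih =>
    rintro x ⟨y, hxy, hy⟩
    exact ⟨y, hxy, ih y hy⟩

end KripkeModel

theorem WC_model_conjunction (M : KripkeModel)
    (hEuc : M.Euclidean) (hUniv : M.UniversalWC) (x : M.W)
    (A B C : Worm)
    (hC : RCDer (.and A.toRC B.toRC) C.toRC ∧ RCDer C.toRC (.and A.toRC B.toRC)) :
    (M.forces x A ∧ M.forces x B) ↔ M.forces x C := by
  have h1 := KripkeModel.soundRC hEuc hUniv hC.1 x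
  have h2 := KripkeModel.soundRC hEuc hUniv hC.2 x
  simp only [KripkeModel.forcesRC, KripkeModel.forcesRC_toRC] at h1 h2
  exact ⟨h1, h2⟩
end
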